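/- There is no finite saturated Nmatrix M = ⟨V, ⊞_M, D⟩ such that ⊢_M = ⊢_⊞. -/

import Mathlib

/-- Formulas built from countably many propositional variables with a single
binary connective `⊞` (platypus). -/
inductive Fm : Type where
  | var : ℕ → Fm
  | pl : Fm → Fm → Fm
deriving DecidableEq

namespace Fm

/-- The set of propositional variables occurring in a formula. -/
def vars : Fm → Set ℕ
  | var n => {n}
  | pl a b => vars a ∪ vars b

/-- A `𝔅_⊞`-valuation: a two-valued function such that
`v (φ ⊞ ψ) ∈ {min (v φ) (v ψ), max (v φ) (v ψ)}`. -/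
def IsVal (v : Fm → Bool) : Prop :=
  ∀ a b : Fm, v (a.pl b) = (v a && v b) ∨ v (a.pl b) = (v a || v b)

/-- The multiple-conclusion consequence `Γ ⊩_⊞ Δ`. -/
def Mc (Γ Δ : Set Fm) : Prop :=
  ∀ v : Fm → Bool, IsVal v → (∀ φ ∈ Γ, v φ = true) → ∃ ψ ∈ Δ, v ψ = true

/-- The single-conclusion consequence `Γ ⊢_⊞ φ`. -/
def Sc (Γ : Set Fm) (φ : Fm) : Prop := Mc Γ {φ}

end Fm

namespace Fm

/-- An `M`-valuation for an Nmatrix `⟨V, op, D⟩` with `op : V → V → ℘(V)∖{∅}`. -/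
def IsNVal {V : Type} (op : V → V → Set V) (v : Fm → V) : Prop :=
  ∀ a b : Fm, v (a.pl b) ∈ op (v a) (v b)

/-- The multiple-conclusion consequence `Γ ⊩_M Δ` of an Nmatrix. -/
def NMc {V : Type} (op : V → V → Set V) (D : Set V) (Γ Δ : Set Fm) : Prop :=
  ∀ v : Fm → V, IsNVal op v → (∀ φ ∈ Γ, v φ ∈ D) → ∃ ψ ∈ Δ, v ψ ∈ D

/-- The single-conclusion consequence `Γ ⊢_M φ` of an Nmatrix. -/
def NSc {V : Type} (op : V → V → Set V) (D : Set V) (Γ : Set Fm) (φ : Fm) : Prop :=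
  NMc op D Γ {φ}

end Fm

/-!
In `⊢_⊞`, no variable `pₖ` follows from the set of all `pᵢ ⊞ pⱼ` with `i ≠ j`: read `⊞` as the
maximum and let `pₖ` be the only variable with value `0`. A saturated Nmatrix for `⊢_⊞` thus
has a single valuation designating all the `pᵢ ⊞ pⱼ` but no variable. If this valuation took the
same value at `pᵢ` and `pⱼ`, then the designated value of `pᵢ ⊞ pⱼ` would also be admissible for
`p ⊞ p` with `p` undesignated, against `p ⊞ p ⊢_⊞ p`. So it is injective on the variables, and
there are infinitely many truth values.
-/

namespace Fm

/-- The two-valued valuation extending the assignment `e` in which `⊞` is always read as the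
maximum. -/
def maxVal (e : ℕ → Bool) : Fm → Bool
  | var n => e n
  | pl a b => maxVal e a || maxVal e b

theorem isVal_maxVal (e : ℕ → Bool) : IsVal (maxVal e) :=
  fun _ _ => Or.inr rfl

theorem IsVal.pl_self {v : Fm → Bool} (hv : IsVal v) (φ : Fm) : v (φ.pl φ) = v φ := by
  simpa only [Bool.and_self, Bool.or_self, or_self] using hv φ φ

theorem sc_iff {Γ : Set Fm} {φ : Fm} :
    Sc Γ φ ↔ ∀ v, IsVal v → (∀ γ ∈ Γ, v γ = true) → v φ = true := by
  simp only [Sc, Mc, Set.mem_singleton_iff, exists_eq_left]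

theorem sc_pl_self (φ : Fm) : Sc {φ.pl φ} φ :=
  sc_iff.2 fun _ hv h => hv.pl_self φ ▸ h _ rfl

/-- The formulas `pᵢ ⊞ pⱼ` for distinct variables `pᵢ` and `pⱼ`: the premises for which saturation
fails in finite Nmatrices. -/
def distinctVarPairs : Set Fm :=
  {φ | ∃ i j, i ≠ j ∧ (var i).pl (var j) = φ}

theorem not_sc_distinctVarPairs_var (k : ℕ) : ¬ Sc distinctVarPairs (var k) := by
  intro h
  let e : ℕ → Bool := fun n => decide (n ≠ k)
  have e_pairs : ∀ φ ∈ distinctVarPairs, maxVal e φ = true := by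
    rintro _ ⟨i, j, hij, rfl⟩
    simp only [maxVal, e, Bool.or_eq_true, decide_eq_true_eq]
    omega
  have e_var : maxVal e (var k) = true := sc_iff.1 h _ (isVal_maxVal e) e_pairs
  simp [maxVal, e] at e_var

/-- The translation replacing each variable that is the right argument of some `⊞` by `β` and every
other variable by `α`. It sends `p` to `α` and `p ⊞ p` to `α ⊞ β`, so that composing it with a
valuation that identifies `α` and `β` yields a valuation again. -/
def splitVars (α β : Fm) : Fm → Fm
  | var _ => α
  | pl a (var _) => (splitVars α β a).pl β
  | pl a (pl b c) => (splitVars α β a).pl (splitVars α β (pl b c))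

section Nmatrix

variable {V : Type} {op : V → V → Set V} {D : Set V} {v : Fm → V}

theorem IsNVal.comp_splitVars (hv : IsNVal op v) {α β : Fm} (hαβ : v α = v β) :
    IsNVal op (v ∘ splitVars α β)
  | a, var _ => by
    simpa only [Function.comp_apply, splitVars, hαβ] using hv (splitVars α β a) β
  | a, pl b c => hv (splitVars α β a) (splitVars α β (pl b c))

theorem IsNVal.mem_of_pl_mem (hv : IsNVal op v) {n : ℕ}
    (idem : NSc op D {(var n).pl (var n)} (var n)) {α β : Fm} (hαβ : v α = v β)
    (hmem : v (α.pl β) ∈ D) : v α ∈ D := by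
  obtain ⟨_, rfl, h⟩ := idem _ (hv.comp_splitVars hαβ) (by rintro _ rfl; exact hmem)
  exact h

theorem IsNVal.injective_comp_var (hv : IsNVal op v) {n : ℕ}
    (idem : NSc op D {(var n).pl (var n)} (var n))
    (pairs_mem : ∀ φ ∈ distinctVarPairs, v φ ∈ D) (var_notMem : ∀ i, v (var i) ∉ D) :
    Function.Injective (v ∘ var) := by
  intro i j hij
  by_contra hne
  exact var_notMem i (hv.mem_of_pl_mem idem hij (pairs_mem _ ⟨i, j, hne, rfl⟩))

/-- Saturation of the Nmatrix `⟨V, op, D⟩`: conclusions that individually fail to follow from `Γ`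
are refuted by a common valuation. Empty outputs of `op` are allowed. -/
def IsSaturated (op : V → V → Set V) (D : Set V) : Prop :=
  ∀ Γ Δ : Set Fm, (∀ ψ ∈ Δ, ¬ NSc op D Γ ψ) → ¬ NMc op D Γ Δ

theorem IsSaturated.exists_isNVal (hsat : IsSaturated op D) {Γ Δ : Set Fm}
    (h : ∀ ψ ∈ Δ, ¬ NSc op D Γ ψ) :
    ∃ v, IsNVal op v ∧ (∀ φ ∈ Γ, v φ ∈ D) ∧ ∀ ψ ∈ Δ, v ψ ∉ D := by
  simpa only [NMc, not_forall, not_exists, not_and, exists_prop] using hsat Γ Δ h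

end Nmatrix

end Fm

open Fm in
theorem platypus_no_finite_saturated_nmatrix_general {V : Type} {op : V → V → Set V} {D : Set V}
    (hsat : IsSaturated op D) (hsc : ∀ (Γ : Set Fm) (φ : Fm), NSc op D Γ φ ↔ Sc Γ φ) :
    Infinite V := by
  have vars_underivable : ∀ ψ ∈ Set.range var, ¬ NSc op D distinctVarPairs ψ := by
    rintro _ ⟨k, rfl⟩
    exact (hsc _ _).not.2 (not_sc_distinctVarPairs_var k)
  obtain ⟨v, hv, pairs_mem, var_notMem⟩ := hsat.exists_isNVal vars_underivable
  have idem : NSc op D {(var 0).pl (var 0)} (var 0) := (hsc _ _).2 (sc_pl_self _)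
  exact Infinite.of_injective _
    (hv.injective_comp_var idem pairs_mem fun i => var_notMem _ ⟨i, rfl⟩)

open Fm in
/-- there is no finite saturated Nmatrix `M = ⟨V, ⊞_M, D⟩`
(all outputs of `⊞_M` nonempty, and `Γ ⊬_M ψ` for all `ψ ∈ Δ` implies
`Γ ⊮_M Δ`) whose single-conclusion consequence is `⊢_⊞`. -/
theorem platypus_no_finite_saturated_nmatrix :
    ¬ ∃ (V : Type) (_ : Finite V) (op : V → V → Set V) (D : Set V),
      (∀ x y : V, (op x y).Nonempty) ∧
      (∀ Γ Δ : Set Fm, (∀ ψ ∈ Δ, ¬ NSc op D Γ ψ) → ¬ NMc op D Γ Δ) ∧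
      (∀ (Γ : Set Fm) (φ : Fm), NSc op D Γ φ ↔ Sc Γ φ) := by
  rintro ⟨V, hfin, op, D, -, hsat, hsc⟩
  exact (platypus_no_finite_saturated_nmatrix_general hsat hsc).not_finite hfin
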